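/- Rohlin's Lemma for isometries of the Urysohn space: for every infinite set S ⊆ ℕ, the set {g ∈ Iso(U) : ∃n ∈ S, g^n = 1} is dense in the isometry group Iso(U) of the Urysohn metric space (with the topology of pointwise convergence). -/

import Mathlib

/-- The one-point extension property characterising the Urysohn space: every finite subset
`F` together with an admissible assignment of (positive) prospective distances `r` is realised
by an actual point `z`. -/
def IsUrysohn (U : Type*) [MetricSpace U] : Prop :=
  ∀ (F : Finset U) (r : U → ℝ),
    (∀ x ∈ F, 0 < r x) →
    (∀ x ∈ F, ∀ y ∈ F, |r x - r y| ≤ dist x y ∧ dist x y ≤ r x + r y) →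
    ∃ z : U, ∀ x ∈ F, dist z x = r x

lemma ury_ext {U : Type*} [MetricSpace U] (hU : IsUrysohn U) {Y : Type*} (D : Y → Y → ℝ)
    (D0 : ∀ x, D x x = 0) (Ds : ∀ x y, D x y = D y x) (Dt : ∀ x y z, D x z ≤ D x y + D y z)
    (s : Finset Y) (f : Y → U) (hf : ∀ y ∈ s, ∀ z ∈ s, dist (f y) (f z) = D y z)
    (t : Finset Y) : ∃ f' : Y → U, (∀ y ∈ s, f' y = f y) ∧
      ∀ y, (y ∈ s ∨ y ∈ t) → ∀ z, (z ∈ s ∨ z ∈ t) → dist (f' y) (f' z) = D y z := by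
  classical
  induction t using Finset.induction_on with
  | empty => exact ⟨f, fun _ _ => rfl, by simpa using hf⟩
  | insert y t hyt ih =>
    obtain ⟨f', h1, h2⟩ := ih
    by_cases hys : y ∈ s
    · refine ⟨f', h1, ?_⟩
      intro a ha b hb
      apply h2
      · rcases ha with ha | ha
        · exact Or.inl ha
        · rcases Finset.mem_insert.1 ha with rfl | ha
          · exact Or.inl hys
          · exact Or.inr ha
      · rcases hb with ha | ha
        · exact Or.inl ha
        · rcases Finset.mem_insert.1 ha with rfl | ha
          · exact Or.inl hys
          · exact Or.inr ha
    have Dn : ∀ x z, 0 ≤ D x z := fun x z => by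
      have := Dt x z x
      rw [D0, Ds z x] at this; linarith
    have key : ∃ p : U, ∀ z, (z ∈ s ∨ z ∈ t) → dist p (f' z) = D y z := by
      by_cases hz : ∃ z, (z ∈ s ∨ z ∈ t) ∧ D y z = 0
      · obtain ⟨z, hz, hz0⟩ := hz
        refine ⟨f' z, fun w hw => ?_⟩
        rw [h2 z hz w hw]
        have a1 := Dt y z w
        have a2 := Dt z y w
        rw [Ds z y] at a2
        linarith
      · push Not at hz
        have hch : ∀ u : U, ∃ r : ℝ, ∀ z, (z ∈ s ∨ z ∈ t) → f' z = u → r = D y z := by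
          intro u
          by_cases hu : ∃ z, (z ∈ s ∨ z ∈ t) ∧ f' z = u
          · obtain ⟨z, hzm, rfl⟩ := hu
            refine ⟨D y z, fun w hw hwz => ?_⟩
            have e := h2 w hw z hzm
            rw [hwz, dist_self] at e
            have a1 := Dt y z w
            have a2 := Dt y w z
            rw [Ds z w] at a1
            linarith
          · exact ⟨0, fun z hz1 hz2 => absurd ⟨z, hz1, hz2⟩ hu⟩
        choose r hr using hch
        have hr' : ∀ z, (z ∈ s ∨ z ∈ t) → r (f' z) = D y z := fun z hz => hr _ z hz rfl
        obtain ⟨p, hp⟩ := hU ((s ∪ t).image f') r (by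
            intro x hx
            obtain ⟨z, hzm, rfl⟩ := Finset.mem_image.1 hx
            have hzm := Finset.mem_union.1 hzm
            rw [hr' z hzm]
            exact lt_of_le_of_ne (Dn _ _) (Ne.symm (hz z hzm))) (by
            intro x hx w hw
            obtain ⟨a, ha, rfl⟩ := Finset.mem_image.1 hx
            obtain ⟨b, hb, rfl⟩ := Finset.mem_image.1 hw
            have ha := Finset.mem_union.1 ha
            have hb := Finset.mem_union.1 hb
            rw [hr' a ha, hr' b hb, h2 a ha b hb]
            have a1 := Dt y a b
            have a2 := Dt y b a
            have a3 := Dt a y b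
            rw [Ds b a] at a2
            rw [Ds a y] at a3
            refine ⟨abs_le.2 ⟨by linarith, by linarith⟩, a3⟩)
        refine ⟨p, fun z hz => ?_⟩
        rw [hp _ (Finset.mem_image_of_mem _ (Finset.mem_union.2 hz)), hr' z hz]
    obtain ⟨p, hp⟩ := key
    refine ⟨Function.update f' y p, ?_, ?_⟩
    · intro z hz
      have : z ≠ y := fun h => hys (h ▸ hz)
      rw [Function.update_of_ne this, h1 z hz]
    · have red : ∀ z, (z ∈ s ∨ z ∈ insert y t) → z ≠ y → (z ∈ s ∨ z ∈ t) := by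
        intro z hz hne
        simpa [hne] using hz
      intro a ha b hb
      by_cases hay : a = y
      · by_cases hby : b = y
        · subst hay; subst hby; simp [D0]
        · subst hay
          rw [Function.update_self, Function.update_of_ne hby]
          exact hp b (red b hb hby)
      · by_cases hby : b = y
        · subst hby
          rw [Function.update_self, Function.update_of_ne hay, dist_comm, Ds]
          exact hp a (red a ha hay)
        · rw [Function.update_of_ne hay, Function.update_of_ne hby]
          exact h2 a (red a ha hay) b (red b hb hby)

def UGood {U : Type*} [MetricSpace U] (n : ℕ) (F : Finset U) (g : U → U) : Prop :=
  (∀ x ∈ F, g x ∈ F) ∧ (∀ x ∈ F, ∀ y ∈ F, dist (g x) (g y) = dist x y) ∧ ∀ x ∈ F, g^[n] x = x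

lemma ury_act {U : Type*} [MetricSpace U] (hU : IsUrysohn U) {Y : Type*} (D : Y → Y → ℝ)
    (D0 : ∀ x, D x x = 0) (Ds : ∀ x y, D x y = D y x) (Dt : ∀ x y z, D x z ≤ D x y + D y z)
    (n : ℕ) (hn : 0 < n) (T : Y → Y) (hT : ∀ y, T^[n] y = y)
    (hTD : ∀ x y, D (T x) (T y) ≤ D x y)
    (s : Finset Y) (f : Y → U) (hf : ∀ y ∈ s, ∀ z ∈ s, dist (f y) (f z) = D y z) :
    ∃ (F : Finset U) (g : U → U) (f' : Y → U), (∀ y ∈ s, f' y = f y) ∧ UGood n F g ∧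
      (∀ y ∈ s, f y ∈ F ∧ g (f y) = f' (T y)) ∧
      ∀ y ∈ s, ∀ z ∈ s, dist (f' (T y)) (f z) = D (T y) z := by
  classical
  have hTi : ∀ m x y, D (T^[m] x) (T^[m] y) ≤ D x y := by
    intro m
    induction m with
    | zero => intro x y; simp
    | succ m ih =>
      intro x y
      rw [Function.iterate_succ_apply, Function.iterate_succ_apply]
      exact (ih _ _).trans (hTD x y)
  have hTe : ∀ x y, D (T x) (T y) = D x y := by
    intro x y
    refine le_antisymm (hTD x y) ?_
    have := hTi (n-1) (T x) (T y)
    rw [← Function.iterate_succ_apply, ← Function.iterate_succ_apply,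
      show (n-1).succ = n by omega, hT, hT] at this
    exact this
  let t : Finset Y := (Finset.range n).biUnion fun i => s.image (T^[i])
  have hst : ∀ y ∈ s, y ∈ t := fun y hy => by
    simp only [t, Finset.mem_biUnion, Finset.mem_range, Finset.mem_image]
    exact ⟨0, hn, y, hy, rfl⟩
  have htT : ∀ y ∈ t, T y ∈ t := by
    intro y hy
    simp only [t, Finset.mem_biUnion, Finset.mem_range, Finset.mem_image] at hy ⊢
    obtain ⟨i, hi, z, hz, rfl⟩ := hy
    by_cases hin : i + 1 = n
    · refine ⟨0, hn, z, hz, ?_⟩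
      rw [← Function.iterate_succ_apply' T, Nat.succ_eq_add_one, hin, hT]; rfl
    · exact ⟨i+1, by omega, z, hz, Function.iterate_succ_apply' T i z⟩
  obtain ⟨f', h1, h2⟩ := ury_ext hU D D0 Ds Dt s f hf t
  have h3 : ∀ y ∈ t, ∀ z ∈ t, dist (f' y) (f' z) = D y z :=
    fun y hy z hz => h2 y (Or.inr hy) z (Or.inr hz)
  have hch : ∀ u : U, ∃ v : U, ∀ y ∈ t, f' y = u → v = f' (T y) := by
    intro u
    by_cases hu : ∃ z ∈ t, f' z = u
    · obtain ⟨z, hz, rfl⟩ := hu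
      refine ⟨f' (T z), fun y hy e => ?_⟩
      rw [← dist_eq_zero, h3 _ (htT z hz) _ (htT y hy), hTe, ← h3 z hz y hy, e, dist_self]
    · exact ⟨u, fun y hy e => absurd ⟨y, hy, e⟩ hu⟩
  choose g hg using hch
  have hg' : ∀ y ∈ t, g (f' y) = f' (T y) := fun y hy => hg _ y hy rfl
  have hgi : ∀ m, ∀ y ∈ t, g^[m] (f' y) = f' (T^[m] y) := by
    intro m
    induction m with
    | zero => intro y _; rfl
    | succ m ih =>
      intro y hy
      rw [Function.iterate_succ_apply, Function.iterate_succ_apply, hg' y hy, ih _ (htT y hy)]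
  refine ⟨t.image f', g, f', h1, ⟨?_, ?_, ?_⟩, ?_, ?_⟩
  · intro x hx
    obtain ⟨y, hy, rfl⟩ := Finset.mem_image.1 hx
    rw [hg' y hy]
    exact Finset.mem_image_of_mem _ (htT y hy)
  · intro x hx x' hx'
    obtain ⟨y, hy, rfl⟩ := Finset.mem_image.1 hx
    obtain ⟨z, hz, rfl⟩ := Finset.mem_image.1 hx'
    rw [hg' y hy, hg' z hz, h3 _ (htT y hy) _ (htT z hz), hTe, h3 y hy z hz]
  · intro x hx
    obtain ⟨y, hy, rfl⟩ := Finset.mem_image.1 hx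
    rw [hgi n y hy, hT]
  · intro y hy
    rw [← h1 y hy]
    exact ⟨Finset.mem_image_of_mem _ (hst y hy), hg' y (hst y hy)⟩
  · intro y hy z hz
    rw [← h1 z hz]
    exact h3 _ (htT y (hst y hy)) _ (hst z hz)

lemma ury_step {U : Type*} [MetricSpace U] (hU : IsUrysohn U) (n : ℕ) (hn : 0 < n)
    (F : Finset U) (g : U → U) (hg : UGood n F g) (x : U) :
    ∃ (F' : Finset U) (g' : U → U), UGood n F' g' ∧ F ⊆ F' ∧ x ∈ F' ∧ ∀ u ∈ F, g' u = g u := by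
  classical
  obtain ⟨gF, gD, gn⟩ := hg
  have hit : ∀ m, ∀ u ∈ F, g^[m] u ∈ F := by
    intro m
    induction m with
    | zero => intro u hu; exact hu
    | succ m ih => intro u hu; rw [Function.iterate_succ_apply]; exact ih _ (gF u hu)
  let σ : F → F := fun u => ⟨g u, gF u u.2⟩
  have hσ : ∀ m (u : F), ((σ^[m] u : F) : U) = g^[m] u := by
    intro m
    induction m with
    | zero => intro u; rfl
    | succ m ih => intro u; rw [Function.iterate_succ_apply, Function.iterate_succ_apply, ih]
  have hσn : σ^[n] = id := by
    funext u
    apply Subtype.ext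
    rw [hσ, gn u u.2]; rfl
  let τ : F → F := σ^[n-1]
  have hστ : ∀ u, σ (τ u) = u := by
    intro u
    show σ (σ^[n-1] u) = u
    rw [← Function.iterate_succ_apply' σ, show (n-1).succ = n by omega, hσn]; rfl
  have hτn : τ^[n] = id := by
    show (σ^[n-1])^[n] = id
    rw [← Function.iterate_mul, mul_comm, Function.iterate_mul, hσn, Function.iterate_id]
  let T : (F → ℝ) → (F → ℝ) := fun φ => φ ∘ τ
  have hTi : ∀ m φ, T^[m] φ = φ ∘ τ^[m] := by
    intro m
    induction m with
    | zero => intro φ; rfl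
    | succ m ih =>
      intro φ
      rw [Function.iterate_succ_apply, ih, Function.iterate_succ']; rfl
  let K : U → (F → ℝ) := fun u f => dist u f
  have hKT : ∀ u ∈ F, T (K u) = K (g u) := by
    intro u hu
    funext f
    show dist u (τ f : U) = dist (g u) f
    rw [← gD u hu _ (τ f).2]
    exact congrArg (fun z : F => dist (g u) (z : U)) (hστ f)
  have hKle : ∀ u v, dist (K u) (K v) ≤ dist u v := by
    intro u v
    rw [dist_pi_le_iff dist_nonneg]
    intro f
    rw [Real.dist_eq]
    exact abs_dist_sub_le u v f
  have hKF : ∀ u, ∀ v ∈ F, dist (K u) (K v) = dist u v := by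
    intro u v hv
    refine le_antisymm (hKle u v) ?_
    have := dist_le_pi_dist (K u) (K v) ⟨v, hv⟩
    simpa [K, Real.dist_eq] using this
  have hK : ∀ u ∈ insert x F, ∀ v ∈ insert x F, dist (K u) (K v) = dist u v := by
    intro u hu v hv
    rcases Finset.mem_insert.1 hv with rfl | hv
    · rcases Finset.mem_insert.1 hu with rfl | hu
      · simp
      · rw [dist_comm, dist_comm u, hKF _ _ hu]
    · exact hKF u v hv
  have : Nonempty U := ⟨x⟩
  let f : (F → ℝ) → U := Function.invFunOn K (insert x F : Finset U)
  have hfK : ∀ u ∈ insert x F, f (K u) = u := by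
    have hinj : Set.InjOn K (insert x F : Finset U) := by
      intro u hu v hv e
      rw [← dist_eq_zero, ← hK u hu v hv, e, dist_self]
    intro u hu
    exact hinj.leftInvOn_invFunOn hu
  obtain ⟨F', g', f', h1, h2, h3, -⟩ := ury_act hU (Y := F → ℝ) dist dist_self dist_comm
    dist_triangle n hn T (by intro y; rw [hTi, hτn]; rfl)
    (by
      intro φ ψ
      rw [dist_pi_le_iff dist_nonneg]
      intro i
      exact dist_le_pi_dist φ ψ (τ i))
    ((insert x F).image K) f (by
      intro y hy z hz
      obtain ⟨u, hu, rfl⟩ := Finset.mem_image.1 hy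
      obtain ⟨v, hv, rfl⟩ := Finset.mem_image.1 hz
      rw [hfK u hu, hfK v hv, hK u hu v hv])
  have h4 : ∀ u ∈ insert x F, u ∈ F' ∧ g' u = f' (T (K u)) := by
    intro u hu
    have := h3 (K u) (Finset.mem_image_of_mem _ hu)
    rwa [hfK u hu] at this
  refine ⟨F', g', h2, fun u hu => (h4 u (Finset.mem_insert_of_mem hu)).1,
    (h4 x (Finset.mem_insert_self _ _)).1, fun u hu => ?_⟩
  have hgu := Finset.mem_insert_of_mem (b := x) (gF u hu)
  rw [(h4 u (Finset.mem_insert_of_mem hu)).2, hKT u hu,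
    h1 _ (Finset.mem_image_of_mem _ hgu), hfK _ hgu]

lemma ury_start {U : Type*} [MetricSpace U] (hU : IsUrysohn U) (h : U ≃ᵢ U) (A : Finset U)
    (ε : ℝ) (hε : 0 < ε) : ∃ N : ℕ, ∀ n ≥ N, 0 < n →
    ∃ (F : Finset U) (g : U → U), UGood n F g ∧ ∀ a ∈ A, a ∈ F ∧ dist (g a) (h a) ≤ ε := by
  classical
  let B : Finset U := A ∪ A.image h
  obtain ⟨C, hC⟩ : ∃ C : ℝ, ∀ u ∈ B, ∀ v ∈ B, dist u v ≤ C := by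
    obtain ⟨C, hC⟩ := Metric.isBounded_iff.1 (B.finite_toSet.isBounded)
    exact ⟨C, fun u hu v hv => hC hu hv⟩
  obtain ⟨N, hN⟩ := exists_nat_ge (C / ε)
  refine ⟨N, fun n hnN hn => ?_⟩
  have hnC : C ≤ ε * n := by
    rw [div_le_iff₀ hε] at hN
    have : (N : ℝ) ≤ n := by exact_mod_cast hnN
    nlinarith
  let w : U → U → ZMod n → ℝ := fun u v c =>
    ⨅ k : {k : ℤ // (k : ZMod n) = c}, (dist ((h ^ (k : ℤ)) u) v + ε * |((k : ℤ) : ℝ)|)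
  have hne : ∀ c : ZMod n, Nonempty {k : ℤ // (k : ZMod n) = c} := fun c => by
    obtain ⟨k, hk⟩ := ZMod.intCast_surjective c
    exact ⟨⟨k, hk⟩⟩
  have wle : ∀ u v (k : ℤ) (c : ZMod n), (k : ZMod n) = c →
      w u v c ≤ dist ((h ^ k) u) v + ε * |(k : ℝ)| := by
    intro u v k c hk
    refine ciInf_le (f := fun k : {k : ℤ // (k : ZMod n) = c} =>
      (dist ((h ^ (k : ℤ)) u) v + ε * |((k : ℤ) : ℝ)|)) ⟨0, ?_⟩ ⟨k, hk⟩
    rintro _ ⟨k, rfl⟩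
    dsimp only
    positivity
  have lew : ∀ u v (c : ZMod n) (r : ℝ), (∀ k : ℤ, (k : ZMod n) = c →
      r ≤ dist ((h ^ k) u) v + ε * |(k : ℝ)|) → r ≤ w u v c := by
    intro u v c r hr
    have := hne c
    exact le_ciInf fun k => hr k k.2
  have wsym : ∀ u v c, w u v c ≤ w v u (-c) := by
    intro u v c
    apply lew
    intro k hk
    have := wle u v (-k) c (by push_cast; rw [hk, neg_neg])
    refine this.trans (le_of_eq ?_)
    have e : dist ((h ^ (-k)) u) v = dist ((h ^ k) v) u := by
      rw [← (h ^ k).dist_eq ((h ^ (-k)) u) v, ← IsometryEquiv.mul_apply, ← zpow_add,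
        add_neg_cancel, zpow_zero, dist_comm]
      rfl
    rw [e]; push_cast; rw [abs_neg]
  have wtri : ∀ u v x c c', w u x (c + c') ≤ w u v c + w v x c' := by
    intro u v x c c'
    rw [← sub_le_iff_le_add']
    apply lew
    intro l hl
    rw [sub_le_iff_le_add', ← sub_le_iff_le_add]
    apply lew
    intro k hk
    rw [sub_le_iff_le_add]
    refine (wle u x (l + k) (c + c') (by push_cast; rw [hl, hk, add_comm])).trans ?_
    have e1 : dist ((h ^ (l + k)) u) x ≤ dist ((h ^ k) u) v + dist ((h ^ l) v) x := by
      rw [← (h ^ l).dist_eq ((h ^ k) u) v, zpow_add, IsometryEquiv.mul_apply]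
      exact dist_triangle _ _ _
    have e2 : |((l + k : ℤ) : ℝ)| ≤ |(l : ℝ)| + |(k : ℝ)| := by
      push_cast; exact abs_add_le _ _
    nlinarith
  have w0 : ∀ u v, w u v 0 ≤ dist u v := by
    intro u v
    have := wle u v 0 0 (by simp)
    simpa using this
  have wnn : ∀ u v c, 0 ≤ w u v c := by
    intro u v c
    apply lew
    intro k _
    positivity
  have wB : ∀ u ∈ B, ∀ v ∈ B, w u v 0 = dist u v := by
    intro u hu v hv
    refine le_antisymm (w0 u v) ?_
    apply lew
    intro k hk
    by_cases hk0 : k = 0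
    · subst hk0; simp
    · have hd : (n : ℤ) ∣ k := (ZMod.intCast_zmod_eq_zero_iff_dvd k n).1 hk
      have hle : (n : ℤ) ≤ |k| := Int.le_of_dvd (abs_pos.2 hk0) ((dvd_abs _ _).2 hd)
      have hle' : (n : ℝ) ≤ |(k : ℝ)| := by exact_mod_cast hle
      have := hC u hu v hv
      have hp : 0 ≤ dist ((h ^ k) u) v := dist_nonneg
      nlinarith
  let D : U × ZMod n → U × ZMod n → ℝ := fun p q => w p.1 q.1 (p.2 - q.2)
  let T : U × ZMod n → U × ZMod n := fun p => (p.1, p.2 + 1)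
  have hTi : ∀ m p, T^[m] p = (p.1, p.2 + (m : ZMod n)) := by
    intro m
    induction m with
    | zero => intro p; simp
    | succ m ih =>
      intro p
      rw [Function.iterate_succ_apply, ih]
      simp only [T]
      push_cast
      rw [add_assoc, add_comm (1 : ZMod n)]
  obtain ⟨F, g, f', h1, h2, h3, h4⟩ := ury_act hU D
    (by
      intro p
      show w p.1 p.1 (p.2 - p.2) = 0
      rw [sub_self]
      exact le_antisymm ((w0 _ _).trans (by simp)) (wnn _ _ _))
    (by
      intro p q
      apply le_antisymm
      · have := wsym p.1 q.1 (p.2 - q.2)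
        rwa [neg_sub] at this
      · have := wsym q.1 p.1 (q.2 - p.2)
        rwa [neg_sub] at this)
    (by
      intro p q r
      have := wtri p.1 q.1 r.1 (p.2 - q.2) (q.2 - r.2)
      rwa [sub_add_sub_cancel] at this)
    n hn T (by intro p; rw [hTi]; simp)
    (by
      intro p q
      show w p.1 q.1 ((p.2 + 1) - (q.2 + 1)) ≤ w p.1 q.1 (p.2 - q.2)
      rw [add_sub_add_right_eq_sub])
    (B.image fun u => (u, (0 : ZMod n))) Prod.fst
    (by
      intro y hy z hz
      obtain ⟨u, hu, rfl⟩ := Finset.mem_image.1 hy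
      obtain ⟨v, hv, rfl⟩ := Finset.mem_image.1 hz
      show dist u v = w u v (0 - 0)
      rw [sub_zero, wB u hu v hv])
  refine ⟨F, g, h2, fun a ha => ?_⟩
  have haB : a ∈ B := Finset.mem_union_left _ ha
  have hhB : h a ∈ B := Finset.mem_union_right _ (Finset.mem_image_of_mem _ ha)
  have ia := Finset.mem_image_of_mem (fun u => (u, (0 : ZMod n))) haB
  have ih := Finset.mem_image_of_mem (fun u => (u, (0 : ZMod n))) hhB
  have e1 := h3 _ ia
  have e2 := h4 _ ia _ ih
  refine ⟨e1.1, ?_⟩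
  have e3 : g a = f' (T (a, 0)) := e1.2
  rw [e3]
  refine (le_of_eq e2).trans ?_
  show w a (h a) (0 + 1 - 0) ≤ ε
  have := wle a (h a) 1 (0 + 1 - 0) (by simp)
  simpa using this

/-- Rohlin's Lemma for isometries of the Urysohn space `U`: for every infinite `S ⊆ ℕ` the
set of isometries `g` of `U` with `g ^ n = 1` for some `n ∈ S` is dense in `Iso(U)` for the
topology of pointwise convergence, i.e., every basic neighbourhood
`{g : ∀ a ∈ A, dist (g a) (h a) < ε}` of an isometry `h` contains such a `g`. -/
theorem stmt18 {U : Type*} [MetricSpace U] [CompleteSpace U]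
    [TopologicalSpace.SeparableSpace U] (hU : IsUrysohn U)
    (S : Set ℕ) (hS : S.Infinite) :
    ∀ (h : U ≃ᵢ U) (A : Finset U) (ε : ℝ), 0 < ε →
      ∃ g : U ≃ᵢ U, (∃ n ∈ S, g ^ n = 1) ∧ ∀ a ∈ A, dist (g a) (h a) < ε := by
  classical
  intro h A ε hε
  obtain ⟨N, hN⟩ := ury_start hU h A (ε / 2) (by positivity)
  obtain ⟨n, hnS, hnN⟩ := hS.exists_gt N
  have hn : 0 < n := by omega
  obtain ⟨F0, g0, hg0, hA0⟩ := hN n hnN.le hn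
  have : Nonempty U := by
    obtain ⟨z, -⟩ := hU ∅ (fun _ => 1) (by simp) (by simp)
    exact ⟨z⟩
  let P := {p : Finset U × (U → U) // UGood n p.1 p.2}
  have hstep : ∀ (p : P) (x : U), ∃ q : P, p.1.1 ⊆ q.1.1 ∧ x ∈ q.1.1 ∧
      ∀ u ∈ p.1.1, q.1.2 u = p.1.2 u := by
    intro p x
    obtain ⟨F', g', a, b, c, d⟩ := ury_step hU n hn p.1.1 p.1.2 p.2 x
    exact ⟨⟨(F', g'), a⟩, b, c, d⟩
  choose nxt hx1 hx2 hx3 using hstep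
  let p : ℕ → P := fun k => Nat.rec ⟨(F0, g0), hg0⟩
    (fun k q => nxt q (TopologicalSpace.denseSeq U k)) k
  have ps : ∀ k, p (k+1) = nxt (p k) (TopologicalSpace.denseSeq U k) := fun k => rfl
  have pm : ∀ k l, k ≤ l → (p k).1.1 ⊆ (p l).1.1 ∧ ∀ u ∈ (p k).1.1, (p l).1.2 u = (p k).1.2 u := by
    intro k l hkl
    induction l, hkl using Nat.le_induction with
    | base => exact ⟨subset_rfl, fun _ _ => rfl⟩
    | succ l _ ih =>
      rw [ps]
      refine ⟨ih.1.trans (hx1 _ _), fun u hu => ?_⟩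
      rw [hx3 _ _ u (ih.1 hu), ih.2 u hu]
  let E : Set U := {u | ∃ k, u ∈ (p k).1.1}
  have hE : Dense E := by
    refine (TopologicalSpace.denseRange_denseSeq U).mono ?_
    rintro _ ⟨k, rfl⟩
    exact ⟨k+1, by rw [ps]; exact hx2 _ _⟩
  have hch : ∀ u : U, ∃ v : U, ∀ k, u ∈ (p k).1.1 → v = (p k).1.2 u := by
    intro u
    by_cases hu : ∃ k, u ∈ (p k).1.1
    · obtain ⟨k, hk⟩ := hu
      refine ⟨(p k).1.2 u, fun l hl => ?_⟩
      rcases le_total k l with hkl | hkl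
      · exact ((pm k l hkl).2 u hk).symm
      · exact (pm l k hkl).2 u hl
    · exact ⟨u, fun k hk => absurd ⟨k, hk⟩ hu⟩
  choose G hG using hch
  have GE : ∀ u ∈ E, G u ∈ E := by
    rintro u ⟨k, hk⟩
    rw [hG u k hk]
    exact ⟨k, (p k).2.1 u hk⟩
  have GD : ∀ u ∈ E, ∀ v ∈ E, dist (G u) (G v) = dist u v := by
    rintro u ⟨k, hk⟩ v ⟨l, hl⟩
    have hk' := (pm k (max k l) (le_max_left _ _)).1 hk
    have hl' := (pm l (max k l) (le_max_right _ _)).1 hl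
    rw [hG u _ hk', hG v _ hl']
    exact (p (max k l)).2.2.1 u hk' v hl'
  have Gn : ∀ u ∈ E, G^[n] u = u := by
    rintro u ⟨k, hk⟩
    have : ∀ m, ∀ u ∈ (p k).1.1, G^[m] u = (p k).1.2^[m] u := by
      intro m
      induction m with
      | zero => intro u _; rfl
      | succ m ih =>
        intro u hu
        rw [Function.iterate_succ_apply, Function.iterate_succ_apply, hG u k hu,
          ih _ ((p k).2.1 u hu)]
    rw [this n u hk]
    exact (p k).2.2.2 u hk
  let GR : E → U := fun u => G u
  have hGRi : Isometry GR := Isometry.of_dist_eq fun u v => GD u u.2 v v.2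
  have hdi : IsDenseInducing ((↑) : E → U) := hE.isDenseInducing_val
  have hui : IsUniformInducing ((↑) : E → U) := isometry_subtype_coe.isUniformInducing
  let H : U → U := hdi.extend GR
  have Hc : Continuous H :=
    (uniformContinuous_uniformly_extend hui hE.denseRange_val hGRi.uniformContinuous).continuous
  have HE : ∀ u ∈ E, H u = G u := by
    intro u hu
    exact uniformly_extend_of_ind hui hE.denseRange_val hGRi.uniformContinuous ⟨u, hu⟩
  have Hiso : Isometry H := by
    apply Isometry.of_dist_eq
    intro x y
    have hcl : IsClosed {q : U × U | dist (H q.1) (H q.2) = dist q.1 q.2} :=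
      isClosed_eq (by fun_prop) (by fun_prop)
    have hsub : E ×ˢ E ⊆ {q : U × U | dist (H q.1) (H q.2) = dist q.1 q.2} := by
      rintro ⟨u, v⟩ ⟨hu, hv⟩
      show dist (H u) (H v) = dist u v
      rw [HE u hu, HE v hv, GD u hu v hv]
    exact hcl.closure_subset_iff.2 hsub ((hE.prod hE) (x, y))
  have Hn : ∀ x, H^[n] x = x := by
    intro x
    have hcl : IsClosed {x : U | H^[n] x = x} := isClosed_eq (Hc.iterate n) continuous_id
    have hsub : E ⊆ {x : U | H^[n] x = x} := by
      intro u hu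
      have : ∀ m, ∀ u ∈ E, H^[m] u = G^[m] u := by
        intro m
        induction m with
        | zero => intro u _; rfl
        | succ m ih =>
          intro u hu
          rw [Function.iterate_succ_apply, Function.iterate_succ_apply, HE u hu, ih _ (GE u hu)]
      show H^[n] u = u
      rw [this n u hu, Gn u hu]
    exact hcl.closure_subset_iff.2 hsub (hE x)
  let g : U ≃ᵢ U := IsometryEquiv.mk' H (H^[n-1]) (by
    intro x
    rw [← Function.iterate_succ_apply' H, show (n-1).succ = n by omega, Hn]) Hiso
  refine ⟨g, ⟨n, hnS, ?_⟩, ?_⟩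
  · have : ∀ m x, (g ^ m) x = H^[m] x := by
      intro m
      induction m with
      | zero => intro x; rfl
      | succ m ih =>
        intro x
        rw [pow_succ, IsometryEquiv.mul_apply, ih, Function.iterate_succ_apply]; rfl
    ext x
    rw [this, Hn]; rfl
  · intro a ha
    obtain ⟨haF, hd⟩ := hA0 a ha
    have : g a = g0 a := by
      show H a = g0 a
      rw [HE a ⟨0, haF⟩, hG a 0 haF]; rfl
    rw [this]
    linarith
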